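/- arXiv:2501.12846 — 2 statements merged into one kernel-verified Lean document; each statement's English description precedes it below -/
import Mathlib

section
/- Let n ≥ 1 and let K = {A_i : i ∈ ℕ} be a countable family of pairwise nonisomorphic structures in Mod. Then K is =_{ℕ^ℕ}^{n+}-learnable if and only if for all i ≠ j there exists a set C ∈ Σ⁰_{2n}(Mod) such that either (every S ≅ A_i is in C and no S ≅ A_j is in C) or (every S ≅ A_j is in C and no S ≅ A_i is in C). -/
/-!  Common definitions.

`Tower n` is the space ℕ^(ℕ^(n+1)) of the paper: `Tower 0 = ℕ → ℕ`,
`Tower (n+1) = ℕ → Tower n`, each with the product topology (ℕ discrete).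
-/

def Tower : ℕ → Type
  | 0 => ℕ → ℕ
  | n + 1 => ℕ → Tower n

instance Tower.topologicalSpace : (n : ℕ) → TopologicalSpace (Tower n)
  | 0 => inferInstanceAs (TopologicalSpace (ℕ → ℕ))
  | n + 1 => letI := Tower.topologicalSpace n
             inferInstanceAs (TopologicalSpace (ℕ → Tower n))

/-- The Friedman–Stanley jump `E⁺` of an equivalence relation `E` on `X`. -/
def FSJump {X : Type*} (E : X → X → Prop) (p q : ℕ → X) : Prop :=
  (∀ k, ∃ l, E (p k) (q l)) ∧ ∀ l, ∃ k, E (q l) (p k)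

/-- The power `E^ω` of an equivalence relation `E` on `X`. -/
def RelPow {X : Type*} (E : X → X → Prop) (p q : ℕ → X) : Prop :=
  ∀ k, E (p k) (q k)

/-- `eqNatPlus n` is the relation `=_ℕ^{(n+1)+}` on `Tower n = ℕ^(ℕ^(n+1))`. -/
def eqNatPlus : (n : ℕ) → Tower n → Tower n → Prop
  | 0 => FSJump (· = · : ℕ → ℕ → Prop)
  | n + 1 => FSJump (eqNatPlus n)

/-- `eqBairePlus n` is the relation `=_{ℕ^ℕ}^{(n+1)+}` on `Tower (n+1) = ℕ^(ℕ^(n+2))`. -/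
def eqBairePlus : (n : ℕ) → Tower (n + 1) → Tower (n + 1) → Prop
  | 0 => FSJump (· = · : (ℕ → ℕ) → (ℕ → ℕ) → Prop)
  | n + 1 => FSJump (eqBairePlus n)

/-- `FullRel m` on `Tower m = ℕ^(ℕ^(m+1))`: for `m = 2n` it is `(=_ℕ^+)^{n(ω+)}`,
for `m = 2n+1` it is `(=_{ℕ^ℕ}^+)^{n(ω+)}` (with `E^{0(ω+)} = E`,
`E^{(n+1)(ω+)} = ((E^{n(ω+)})^ω)^+`). -/
def FullRel : (m : ℕ) → Tower m → Tower m → Prop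
  | 0 => FSJump (· = · : ℕ → ℕ → Prop)
  | 1 => FSJump (· = · : (ℕ → ℕ) → (ℕ → ℕ) → Prop)
  | m + 2 => FSJump (RelPow (FullRel m))

/-- The pair of canonical elements `(F_{m+1}, I_{m+1})` of `Tower m = ℕ^(ℕ^(m+1))`. -/
def can : (m : ℕ) → Tower m × Tower m
  | 0 => (fun k => if k = 0 then 0 else 1, fun _ => 1)
  | 1 => (fun i k => if i = 0 then 0 else if k + 1 < i then 0 else 1,
          fun i k => if k < i then 0 else 1)
  | m + 2 =>
      (fun i k => if i = 0 then (can m).1 else if k + 1 < i then (can m).1 else (can m).2,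
       fun i k => if k < i then (can m).1 else (can m).2)

/-- The canonical element `F_{m+1} ∈ ℕ^(ℕ^(m+1))`. -/
def canF (m : ℕ) : Tower m := (can m).1

/-- The canonical element `I_{m+1} ∈ ℕ^(ℕ^(m+1))`. -/
def canI (m : ℕ) : Tower m := (can m).2

/-- `p ∈ Tower m = ℕ^(ℕ^(m+1))` is `full_{m+1}`. -/
def IsFull (m : ℕ) (p : Tower m) : Prop := FullRel m p (canF m)

/-- `p ∈ Tower m = ℕ^(ℕ^(m+1))` is `initial_{m+1}`. -/
def IsInitial (m : ℕ) (p : Tower m) : Prop := FullRel m p (canI m)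

open Classical in
/-- The permission operator `∧₀`. -/
noncomputable def perm0 (p q : ℕ → ℕ) : ℕ → ℕ :=
  fun k => if ∀ j ≤ k, p j = q j then p k else 1

/-- The permission operator `∧_{m+1}` on `Tower m = ℕ^(ℕ^(m+1))`
(with `⟨·,·⟩ = Nat.pair`). -/
noncomputable def perm : (m : ℕ) → Tower m → Tower m → Tower m
  | 0, p, q => fun x => max (p (Nat.unpair x).1) (q (Nat.unpair x).2)
  | 1, p, q => fun x => perm0 (p (Nat.unpair x).1) (q (Nat.unpair x).2)
  | m + 2, p, q => fun x k => perm m (p (Nat.unpair x).1 k) (q (Nat.unpair x).2 k)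

/-- The operator `⊗_{m+1,i}` on `Tower m = ℕ^(ℕ^(m+1))` (with `⟨·,·⟩ = Nat.pair`). -/
def otimes : (m : ℕ) → ℕ → Tower m → Tower m
  | 0, i, p => fun k => Nat.pair (p k) i
  | m + 1, i, p => fun k => otimes m i (p k)

/-- `E` continuously reduces to `F`. -/
def ContReduces {X Y : Type*} [TopologicalSpace X] [TopologicalSpace Y]
    (E : X → X → Prop) (F : Y → Y → Prop) : Prop :=
  ∃ f : X → Y, Continuous f ∧ ∀ x x', E x x' ↔ F (f x) (f x')

/-- `SigmaLevel X n` is the pointclass `Σ⁰_{n+1}(X)`: `Σ⁰_1` = open sets,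
`Σ⁰_{n+1}` = countable unions of complements of `Σ⁰_n` sets. -/
def SigmaLevel (X : Type*) [TopologicalSpace X] : ℕ → Set (Set X)
  | 0 => {C | IsOpen C}
  | n + 1 => {C | ∃ A : ℕ → Set X, (∀ i, A i ∈ SigmaLevel X n) ∧ C = ⋃ i, (A i)ᶜ}

/-- The space of `(ι, ar)`-structures with domain ℕ. -/
def Md (ι : Type) (ar : ι → ℕ) : Type := ∀ i : ι, (Fin (ar i) → ℕ) → Bool

instance (ι : Type) (ar : ι → ℕ) : TopologicalSpace (Md ι ar) :=
  inferInstanceAs (TopologicalSpace (∀ i : ι, (Fin (ar i) → ℕ) → Bool))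

/-- Isomorphism of structures with domain ℕ. -/
def Iso {ι : Type} {ar : ι → ℕ} (A B : Md ι ar) : Prop :=
  ∃ σ : ℕ → ℕ, Function.Bijective σ ∧ ∀ i v, A i v = B i (σ ∘ v)

/-- The learning domain of a family: the closure of `K` under isomorphism. -/
def LearnDom {ι : Type} {ar : ι → ℕ} (K : Set (Md ι ar)) : Set (Md ι ar) :=
  {S | ∃ A ∈ K, Iso S A}

/-- The family `K` is `E`-learnable. -/
def Learnable {ι : Type} {ar : ι → ℕ} {X : Type*} [TopologicalSpace X]
    (E : X → X → Prop) (K : Set (Md ι ar)) : Prop :=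
  ∃ Γ : LearnDom K → X, Continuous Γ ∧
    ∀ S S' : LearnDom K, (Iso S.1 S'.1 ↔ E (Γ S) (Γ S'))

/-- A countable family of pairwise nonisomorphic structures. -/
def GoodFamily {ι : Type} {ar : ι → ℕ} (K : Set (Md ι ar)) : Prop :=
  K.Countable ∧ ∀ A ∈ K, ∀ B ∈ K, A ≠ B → ¬ Iso A B

/-- `E` is learn-reducible to `F` (w.r.t. structures in `Md ι ar`). -/
def LearnRed (ι : Type) (ar : ι → ℕ) {X Y : Type*} [TopologicalSpace X]
    [TopologicalSpace Y] (E : X → X → Prop) (F : Y → Y → Prop) : Prop :=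
  ∀ K : Set (Md ι ar), GoodFamily K → Learnable E K → Learnable F K

/-- `E` is compact for learning (w.r.t. structures in `Md ι ar`). -/
def CompactForLearning (ι : Type) (ar : ι → ℕ) {X : Type*} [TopologicalSpace X]
    (E : X → X → Prop) : Prop :=
  ∀ K : Set (Md ι ar), GoodFamily K →
    (Learnable E K ↔ ∀ A ∈ K, ∀ B ∈ K, A ≠ B → Learnable E ({A, B} : Set (Md ι ar)))

/-!
The classes of the `n`-th jump `E` of equality on Baire space are of class `Π⁰_{2n+1}`. Two
inequivalent points of the domain of `E⁺` are therefore told apart by an `E⁺`-invariant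
`Σ⁰_{2n+2}` set `{q | ∃ k, q k E z}`, and its preimage under a learner separates isomorphism types.

Conversely, Vaught transforms make the given `Σ⁰_{2n+2}` separators invariant under isomorphism.
Membership in sets of increasing complexity is coded by continuous maps whose values lie, up to
equivalence, in a prescribed small set: the power of a relation turns a code with two inequivalent
values `u`, `v` into one with values `u u u …` off the set and `u … u v v …` on it, and the jump
turns a code with values `b` off the sets and `a 0, a 1, …` on them into one with the two values
`{b, a 0, a 1, …}` and `{a 0, a 1, …}`. Tagging merges countable powers into the jump, so that each
jump gains two levels, and it finally merges the codes of all the separators into one learner.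
The induction starts from clopen sets: the learning domain is covered by countably many continuous
images of the Polish group `S_∞`, hence is hereditarily Lindelöf, and its open sets are countable
unions of clopen ones.
-/

open Set Topology TopologicalSpace

section FSJump

variable {Z : Type*} {E : Z → Z → Prop}

theorem FSJump.equivalence (hE : Equivalence E) : Equivalence (FSJump E) where
  refl p := ⟨fun k => ⟨k, hE.refl _⟩, fun k => ⟨k, hE.refl _⟩⟩
  symm h := ⟨h.2, h.1⟩
  trans := by
    rintro p q r ⟨hpq, hqp⟩ ⟨hqr, hrq⟩
    constructor
    · intro k
      obtain ⟨l, hl⟩ := hpq k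
      exact (hqr l).imp fun _ => hE.trans hl
    · intro k
      obtain ⟨l, hl⟩ := hrq k
      exact (hqp l).imp fun _ => hE.trans hl

theorem fsJump_comp_iff {κ : Type*} {s : ℕ → κ} (hs : s.Surjective) {q : κ → Z} {p : ℕ → Z} :
    FSJump E (q ∘ s) p ↔ (∀ k, ∃ l, E (q k) (p l)) ∧ ∀ l, ∃ k, E (p l) (q k) :=
  and_congr (hs.forall (p := fun k => ∃ l, E (q k) (p l))).symm
    (forall_congr' fun l => (hs.exists (p := fun k => E (p l) (q k))).symm)

variable [TopologicalSpace Z] {t : ℕ → Z → Z}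

/-- `t` is a continuous reduction of the product of equality on `ℕ` with `E` to `E`, so `t i p` is
`p` together with the tag `i`. The operators `⊗` of the paper are the instance used here. -/
structure IsTagging (E : Z → Z → Prop) (t : ℕ → Z → Z) : Prop where
  continuous (i : ℕ) : Continuous (t i)
  rel_iff (i j : ℕ) (p q : Z) : E (t i p) (t j q) ↔ i = j ∧ E p q

theorem IsTagging.fsJump (ht : IsTagging E t) :
    IsTagging (FSJump E) fun i p k => t i (p k) where
  continuous i := continuous_pi fun k => (ht.continuous i).comp (continuous_apply k)
  rel_iff i j p q := by
    simp only [FSJump, ht.rel_iff]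
    constructor
    · rintro ⟨hpq, hqp⟩
      exact ⟨(hpq 0).choose_spec.1, fun k => (hpq k).imp fun _ => And.right,
        fun k => (hqp k).imp fun _ => And.right⟩
    · rintro ⟨rfl, hpq, hqp⟩
      exact ⟨fun k => (hpq k).imp fun _ h => ⟨rfl, h⟩, fun k => (hqp k).imp fun _ h => ⟨rfl, h⟩⟩

/-- The enumeration of all `t k (p k i)`: it amalgamates countably many points of the domain of
`FSJump E` into a single one, the tags `t k` keeping them apart. -/
def FSJump.merge (t : ℕ → Z → Z) (p : ℕ → ℕ → Z) : ℕ → Z :=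
  fun x => t x.unpair.1 (p x.unpair.1 x.unpair.2)

theorem FSJump.continuous_merge (ht : ∀ i, Continuous (t i)) : Continuous (FSJump.merge t) :=
  continuous_pi fun _ => (ht _).comp ((continuous_apply _).comp (continuous_apply _))

theorem IsTagging.fsJump_merge_iff (ht : IsTagging E t) (p q : ℕ → ℕ → Z) :
    FSJump E (FSJump.merge t p) (FSJump.merge t q) ↔ RelPow (FSJump E) p q := by
  have half (p q : ℕ → ℕ → Z) : (∀ x, ∃ y, E (FSJump.merge t p x) (FSJump.merge t q y)) ↔
      ∀ k i, ∃ j, E (p k i) (q k j) := by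
    simp only [FSJump.merge, ht.rel_iff]
    constructor
    · intro h k i
      obtain ⟨y, hk, hy⟩ := h (Nat.pair k i)
      rw [← hk, Nat.unpair_pair] at hy
      exact ⟨_, hy⟩
    · intro h x
      obtain ⟨j, hj⟩ := h x.unpair.1 x.unpair.2
      exact ⟨Nat.pair x.unpair.1 j, by simpa using hj⟩
  simp only [FSJump, RelPow, half, forall_and]

end FSJump

section CountableUnionCompl

variable {X : Type*} {𝒟 : Set (Set X)}

/-- The countable unions of complements of members of `𝒟`, so that `Σ⁰_{n+1}` is obtained from
`Σ⁰_n`. -/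
def countableUnionCompl (𝒟 : Set (Set X)) : Set (Set X) :=
  {C | ∃ D : ℕ → Set X, (∀ i, D i ∈ 𝒟) ∧ C = ⋃ i, (D i)ᶜ}

theorem iUnion_compl_mem_countableUnionCompl {κ : Type*} [Countable κ] [Nonempty κ]
    {D : κ → Set X} (hD : ∀ k, D k ∈ 𝒟) : ⋃ k, (D k)ᶜ ∈ countableUnionCompl 𝒟 := by
  obtain ⟨e, he⟩ := exists_surjective_nat κ
  exact ⟨D ∘ e, fun i => hD (e i), (he.iUnion_comp fun k => (D k)ᶜ).symm⟩

theorem supClosed_countableUnionCompl (𝒟 : Set (Set X)) : SupClosed (countableUnionCompl 𝒟) := by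
  rintro _ ⟨D, hD, rfl⟩ _ ⟨D', hD', rfl⟩
  have := iUnion_compl_mem_countableUnionCompl (D := Sum.elim D D') (Sum.forall.2 ⟨hD, hD'⟩)
  rwa [iUnion_sum] at this

theorem infClosed_countableUnionCompl (h𝒟 : SupClosed 𝒟) :
    InfClosed (countableUnionCompl 𝒟) := by
  rintro _ ⟨D, hD, rfl⟩ _ ⟨D', hD', rfl⟩
  have := iUnion_compl_mem_countableUnionCompl (D := fun k : ℕ × ℕ => D k.1 ∪ D' k.2)
    fun k => h𝒟 (hD k.1) (hD' k.2)
  convert this using 1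
  ext
  simp

theorem dissipate_mem (h𝒟 : InfClosed 𝒟) {D : ℕ → Set X} (hD : ∀ i, D i ∈ 𝒟) (j : ℕ) :
    dissipate D j ∈ 𝒟 := by
  induction j with
  | zero => simpa using hD 0
  | succ j ih =>
    rw [dissipate_succ]
    exact h𝒟 ih (hD (j + 1))

end CountableUnionCompl

section SigmaLevel

variable {X Y : Type*} [TopologicalSpace X] [TopologicalSpace Y] {n : ℕ}

theorem empty_and_univ_mem_sigmaLevel (n : ℕ) :
    (∅ : Set X) ∈ SigmaLevel X n ∧ univ ∈ SigmaLevel X n := by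
  induction n with
  | zero => exact ⟨isOpen_empty, isOpen_univ⟩
  | succ n ih =>
    exact ⟨⟨fun _ => univ, fun _ => ih.2, by simp⟩,
      fun _ => ∅, fun _ => ih.1, by simp [iUnion_const]⟩

theorem iUnion_compl_mem_sigmaLevel {κ : Type*} [Countable κ] {D : κ → Set X}
    (hD : ∀ k, D k ∈ SigmaLevel X n) : ⋃ k, (D k)ᶜ ∈ SigmaLevel X (n + 1) := by
  rcases isEmpty_or_nonempty κ with hκ | hκ
  · simpa using (empty_and_univ_mem_sigmaLevel (X := X) (n + 1)).1
  · exact iUnion_compl_mem_countableUnionCompl hD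

theorem supClosed_sigmaLevel : ∀ n, SupClosed (SigmaLevel X n)
  | 0 => fun _ hC _ hD => IsOpen.union hC hD
  | _ + 1 => supClosed_countableUnionCompl _

theorem infClosed_sigmaLevel : ∀ n, InfClosed (SigmaLevel X n)
  | 0 => fun _ hC _ hD => IsOpen.inter hC hD
  | n + 1 => infClosed_countableUnionCompl (supClosed_sigmaLevel n)

theorem preimage_mem_sigmaLevel {f : Y → X} (hf : Continuous f) :
    ∀ {n : ℕ} {C : Set X}, C ∈ SigmaLevel X n → f ⁻¹' C ∈ SigmaLevel Y n
  | 0, _, hC => IsOpen.preimage hf hC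
  | _ + 1, _, ⟨D, hD, hC⟩ =>
    ⟨fun i => f ⁻¹' D i, fun i => preimage_mem_sigmaLevel hf (hD i), by simp [hC, preimage_iUnion]⟩

theorem exists_sigmaLevel_preimage_eq_of_isInducing {f : Y → X} (hf : IsInducing f) :
    ∀ {n : ℕ} {C : Set Y}, C ∈ SigmaLevel Y n → ∃ B ∈ SigmaLevel X n, f ⁻¹' B = C
  | 0, _, hC => hf.isOpen_iff.1 hC
  | n + 1, _, ⟨D, hD, hC⟩ => by
    choose B hB hBD using fun i => exists_sigmaLevel_preimage_eq_of_isInducing hf (hD i)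
    exact ⟨⋃ i, (B i)ᶜ, ⟨B, hB, rfl⟩, by simp [hC, hBD, preimage_iUnion]⟩

theorem baireMeasurableSet_of_mem_sigmaLevel :
    ∀ {n : ℕ} {C : Set X}, C ∈ SigmaLevel X n → BaireMeasurableSet C
  | 0, _, hC => IsOpen.baireMeasurableSet hC
  | _ + 1, _, ⟨_, hD, hC⟩ =>
    hC ▸ .iUnion fun i => (baireMeasurableSet_of_mem_sigmaLevel (hD i)).compl

end SigmaLevel

section ClassComplexity

variable {Z : Type*} [TopologicalSpace Z] {E : Z → Z → Prop} {n : ℕ}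

theorem exists_rel_apply_mem_sigmaLevel (hE : ∀ z, {w | ¬ E w z} ∈ SigmaLevel Z n) (z : Z) :
    {q : ℕ → Z | ∃ k, E (q k) z} ∈ SigmaLevel (ℕ → Z) (n + 1) := by
  have := iUnion_compl_mem_sigmaLevel fun k : ℕ =>
    preimage_mem_sigmaLevel (continuous_apply (A := fun _ => Z) k) (hE z)
  convert this
  ext
  simp

theorem not_fsJump_mem_sigmaLevel (hsymm : ∀ {z w}, E z w → E w z)
    (hE : ∀ z, {w | ¬ E w z} ∈ SigmaLevel Z n) (p : ℕ → Z) :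
    {q | ¬ FSJump E q p} ∈ SigmaLevel (ℕ → Z) (n + 2) := by
  have hsub (k : ℕ) : {q : ℕ → Z | ∃ l, E (q k) (p l)} ∈ SigmaLevel (ℕ → Z) (n + 1) := by
    have := iUnion_compl_mem_sigmaLevel fun l : ℕ =>
      preimage_mem_sigmaLevel (continuous_apply (A := fun _ => Z) k) (hE (p l))
    convert this
    ext
    simp
  have hsup (l : ℕ) := exists_rel_apply_mem_sigmaLevel hE (p l)
  convert supClosed_sigmaLevel (n + 2) (iUnion_compl_mem_sigmaLevel hsub)
    (iUnion_compl_mem_sigmaLevel hsup)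
  ext q
  have hcomm (l k : ℕ) : E (p l) (q k) ↔ E (q k) (p l) := ⟨hsymm, hsymm⟩
  simp [FSJump, hcomm, imp_iff_not_or]

theorem exists_fsJump_invariant_mem_sigmaLevel (hE : Equivalence E)
    (hclass : ∀ z, {w | ¬ E w z} ∈ SigmaLevel Z n) {p q : ℕ → Z} (hpq : ¬ FSJump E p q) :
    ∃ D ∈ SigmaLevel (ℕ → Z) (n + 1),
      (∀ r s, FSJump E r s → (r ∈ D ↔ s ∈ D)) ∧ ¬ (p ∈ D ↔ q ∈ D) := by
  have hinv (z : Z) (r s : ℕ → Z) (hrs : FSJump E r s) : (∃ k, E (r k) z) ↔ ∃ k, E (s k) z := by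
    constructor
    · rintro ⟨k, hk⟩
      exact (hrs.1 k).imp fun _ hl => hE.trans (hE.symm hl) hk
    · rintro ⟨k, hk⟩
      exact (hrs.2 k).imp fun _ hl => hE.trans (hE.symm hl) hk
  obtain ⟨z, hz⟩ : ∃ z, ¬ ((∃ k, E (p k) z) ↔ ∃ k, E (q k) z) := by
    contrapose! hpq
    exact ⟨fun k => ((hpq (p k)).1 ⟨k, hE.refl _⟩).imp fun _ => hE.symm,
      fun k => ((hpq (q k)).2 ⟨k, hE.refl _⟩).imp fun _ => hE.symm⟩
  exact ⟨_, exists_rel_apply_mem_sigmaLevel hclass z, hinv z, hz⟩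

end ClassComplexity

section Codes

variable {X Z W : Type*} [TopologicalSpace X] [TopologicalSpace Z] [TopologicalSpace W]
  {E : Z → Z → Prop} {F : W → W → Prop} {𝒞 𝒟 : Set (Set X)} {a : ℕ → Z} {b u v : Z}

/-- Membership in any set in `𝒟` can be decided, up to `E`, by a continuous map: its values are
equivalent to `u` on the set and to the inequivalent point `v` off it. -/
structure IsTwoPointCode (𝒟 : Set (Set X)) (E : Z → Z → Prop) (u v : Z) : Prop where
  not_rel : ¬ E u v
  exists_continuous {D : Set X} (hD : D ∈ 𝒟) :
    ∃ g : X → Z, Continuous g ∧ (∀ x ∈ D, E (g x) u) ∧ ∀ x ∉ D, E (g x) v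

/-- A variant of `IsTwoPointCode` in which membership is witnessed by some term of the sequence `a`
and nonmembership by the single point `b`. -/
structure IsSequenceCode (𝒞 : Set (Set X)) (E : Z → Z → Prop) (b : Z) (a : ℕ → Z) : Prop where
  not_rel (k : ℕ) : ¬ E b (a k)
  exists_continuous {C : Set X} (hC : C ∈ 𝒞) :
    ∃ f : X → Z, Continuous f ∧ (∀ x ∉ C, E (f x) b) ∧ ∀ x ∈ C, ∃ k, E (f x) (a k)

theorem IsSequenceCode.mono (h : IsSequenceCode 𝒟 E b a) (h𝒞 : 𝒞 ⊆ 𝒟) :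
    IsSequenceCode 𝒞 E b a :=
  ⟨h.not_rel, fun hC => h.exists_continuous (h𝒞 hC)⟩

theorem IsSequenceCode.map (h : IsSequenceCode 𝒞 E b a) {r : Z → W} (hr : Continuous r)
    (hrel : ∀ x y, F (r x) (r y) ↔ E x y) : IsSequenceCode 𝒞 F (r b) (r ∘ a) where
  not_rel k := by simpa only [Function.comp_apply, hrel] using h.not_rel k
  exists_continuous hC := by
    obtain ⟨f, hf, hfb, hfa⟩ := h.exists_continuous hC
    refine ⟨r ∘ f, hr.comp hf, ?_⟩
    simpa only [Function.comp_apply, hrel] using And.intro hfb hfa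

/-- If `C = ⋃ i, (D i)ᶜ`, the first index `k` with `x ∉ D k` is the point at which the coordinates
coding `x ∈ ⋂ i ≤ j, D i` change from `u` to `v`; for `x ∉ C` they never do. -/
theorem IsTwoPointCode.relPow (h : IsTwoPointCode 𝒟 E u v) (h𝒟 : InfClosed 𝒟) :
    IsSequenceCode (countableUnionCompl 𝒟) (RelPow E) (fun _ => u)
      fun k j => if j < k then u else v where
  not_rel k hk := h.not_rel (by simpa using hk k)
  exists_continuous := by
    rintro _ ⟨D, hD, rfl⟩
    choose g hg hgu hgv using fun j => h.exists_continuous (dissipate_mem h𝒟 hD j)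
    refine ⟨fun x j => g j x, continuous_pi hg, fun x hx j => hgu j x ?_, fun x hx => ?_⟩
    · simp only [mem_iUnion, mem_compl_iff, not_exists, not_not] at hx
      simp [mem_dissipate, hx]
    · simp only [mem_iUnion, mem_compl_iff] at hx
      classical
      refine ⟨Nat.find hx, fun j => ?_⟩
      beta_reduce
      split_ifs with hj
      · exact hgu j x (mem_dissipate.2 fun i hi => not_not.1 (Nat.find_min hx (hi.trans_lt hj)))
      · exact hgv j x fun hxj => Nat.find_spec hx (mem_dissipate.1 hxj _ (not_lt.1 hj))

/-- The sequence `b, a 0, a 1, …`. -/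
def seqCons (b : Z) (a : ℕ → Z) : ℕ → Z
  | 0 => b
  | k + 1 => a k

theorem IsSequenceCode.fsJump (h : IsSequenceCode 𝒞 E b a) (hE : Equivalence E) :
    IsTwoPointCode (countableUnionCompl 𝒞) (FSJump E) (seqCons b a) a where
  not_rel hab := (hab.1 0).elim h.not_rel
  exists_continuous := by
    rintro _ ⟨C, hC, rfl⟩
    choose f hf hfb hfa using fun i => h.exists_continuous (hC i)
    let e := Equiv.natSumNatEquivNat
    let g (x : X) : ℕ ⊕ ℕ → Z := Sum.elim (fun i => f i x) a
    have hg : Continuous fun x => g x ∘ e.symm := by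
      refine continuous_pi fun y => ?_
      rcases hy : e.symm y with i | k
      · simpa [g, hy] using hf i
      · simpa [g, hy] using continuous_const
    have fsJump_iff (x : X) (p : ℕ → Z) : FSJump E (g x ∘ e.symm) p ↔
        ((∀ i, ∃ l, E (f i x) (p l)) ∧ ∀ k, ∃ l, E (a k) (p l)) ∧
          ∀ l, (∃ i, E (p l) (f i x)) ∨ ∃ k, E (p l) (a k) := by
      simp only [fsJump_comp_iff e.symm.surjective, Sum.forall, Sum.exists, g, Sum.elim_inl,
        Sum.elim_inr]
    refine ⟨_, hg, fun x hx => (fsJump_iff x _).2 ⟨⟨fun i => ?_, fun k => ⟨k + 1, hE.refl _⟩⟩, ?_⟩,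
      fun x hx => (fsJump_iff x _).2 ⟨⟨fun i => hfa i x ?_, fun k => ⟨k, hE.refl _⟩⟩,
        fun l => .inr ⟨l, hE.refl _⟩⟩⟩
    · by_cases hxi : x ∈ C i
      · exact (hfa i x hxi).elim fun k hk => ⟨k + 1, hk⟩
      · exact ⟨0, hfb i x hxi⟩
    · obtain ⟨i, hi⟩ := mem_iUnion.1 hx
      rintro (_ | k)
      · exact .inl ⟨i, hE.symm (hfb i x hi)⟩
      · exact .inr ⟨k, hE.refl _⟩
    · by_contra hxi
      exact hx (mem_iUnion.2 ⟨i, hxi⟩)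

theorem IsTwoPointCode.exists_continuous_rel_iff (h : IsTwoPointCode 𝒟 E u v) (hE : Equivalence E)
    {D : Set X} (hD : D ∈ 𝒟) :
    ∃ g : X → Z, Continuous g ∧ ∀ x y, E (g x) (g y) ↔ (x ∈ D ↔ y ∈ D) := by
  obtain ⟨g, hg, hgu, hgv⟩ := h.exists_continuous hD
  refine ⟨g, hg, fun x y => ?_⟩
  have hne {x y : X} (hx : x ∈ D) (hy : y ∉ D) : ¬ E (g x) (g y) := fun hxy =>
    h.not_rel (hE.trans (hE.symm (hgu x hx)) (hE.trans hxy (hgv y hy)))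
  by_cases hx : x ∈ D <;> by_cases hy : y ∈ D
  · simp [hx, hy, hE.trans (hgu x hx) (hE.symm (hgu y hy))]
  · simp [hx, hy, hne hx hy]
  · simpa [hx, hy] using fun hxy => hne hy hx (hE.symm hxy)
  · simp [hx, hy, hE.trans (hgv x hx) (hE.symm (hgv y hy))]

theorem IsTwoPointCode.exists_continuous_fsJump_iff {p q : ℕ → Z} {t : ℕ → Z → Z}
    (h : IsTwoPointCode 𝒟 (FSJump E) p q) (hE : Equivalence E) (ht : IsTagging E t)
    {D : ℕ → Set X} (hD : ∀ k, D k ∈ 𝒟) :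
    ∃ Γ : X → ℕ → Z, Continuous Γ ∧
      ∀ x y, FSJump E (Γ x) (Γ y) ↔ ∀ k, (x ∈ D k ↔ y ∈ D k) := by
  choose g hg hgD using fun k => h.exists_continuous_rel_iff (FSJump.equivalence hE) (hD k)
  refine ⟨fun x => FSJump.merge t fun k => g k x,
    (FSJump.continuous_merge ht.continuous).comp (continuous_pi hg), fun x y => ?_⟩
  simp only [ht.fsJump_merge_iff, RelPow, hgD]

theorem infClosed_isClopen : InfClosed {D : Set X | IsClopen D} :=
  fun _ hC _ hD => IsClopen.inter hC hD

theorem isTwoPointCode_isClopen :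
    IsTwoPointCode {D : Set X | IsClopen D} (Eq : ℕ → ℕ → Prop) 1 0 where
  not_rel := one_ne_zero
  exists_continuous {D} hD := by
    refine ⟨Bool.toNat ∘ D.boolIndicator, continuous_of_discreteTopology.comp
      ((continuous_boolIndicator_iff_isClopen D).2 hD), fun x hx => ?_, fun x hx => ?_⟩
    · simp [(mem_iff_boolIndicator D x).1 hx]
    · simp [(notMem_iff_boolIndicator D x).1 hx]

theorem mem_countableUnionCompl_isClopen_of_isOpen [HereditarilyLindelofSpace X]
    (hbasis : IsTopologicalBasis {D : Set X | IsClopen D}) {C : Set X} (hC : IsOpen C) :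
    C ∈ countableUnionCompl {D : Set X | IsClopen D} := by
  obtain ⟨κ, D, rfl, hD⟩ := hbasis.open_eq_iUnion hC
  rcases isEmpty_or_nonempty κ with hκ | hκ
  · exact ⟨fun _ => univ, fun _ => isClopen_univ, by simp⟩
  · obtain ⟨e, he⟩ := eq_open_union_nat D fun k => (hD k).isOpen
    exact ⟨fun i => (D (e i))ᶜ, fun i => (hD (e i)).compl, by simp [he]⟩

end Codes

section BaireJump

/-- The iterated jump of equality on Baire space, starting from equality itself, so that
`eqBairePlus n` is its value at `n + 1`. -/
def baireJump : (m : ℕ) → Tower m → Tower m → Prop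
  | 0 => Eq
  | m + 1 => FSJump (baireJump m)

theorem eqBairePlus_eq_baireJump : ∀ n, eqBairePlus n = baireJump (n + 1)
  | 0 => rfl
  | n + 1 => congrArg FSJump (eqBairePlus_eq_baireJump n)

theorem equivalence_baireJump : ∀ m, Equivalence (baireJump m)
  | 0 => eq_equivalence
  | m + 1 => FSJump.equivalence (equivalence_baireJump m)

theorem isTagging_natPair :
    IsTagging (Eq : (ℕ → ℕ) → (ℕ → ℕ) → Prop) fun i p k => Nat.pair (p k) i where
  continuous i := continuous_pi fun k =>
    (continuous_of_discreteTopology (f := fun l : ℕ => Nat.pair l i)).comp (continuous_apply k)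
  rel_iff i j p q := by
    simp only [funext_iff, Nat.pair_eq_pair, forall_and, forall_const, and_comm]

theorem isTagging_otimes : ∀ m, IsTagging (baireJump m) (otimes m)
  | 0 => isTagging_natPair
  | m + 1 => (isTagging_otimes m).fsJump

theorem not_baireJump_mem_sigmaLevel :
    ∀ m (z : Tower m), {w | ¬ baireJump m w z} ∈ SigmaLevel (Tower m) (2 * m)
  | 0, z => (isClosed_singleton (X := ℕ → ℕ) (x := z)).isOpen_compl
  | m + 1, z => not_fsJump_mem_sigmaLevel (equivalence_baireJump m).symm
    (not_baireJump_mem_sigmaLevel m) z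

variable {X : Type*} [TopologicalSpace X] [HereditarilyLindelofSpace X]

theorem exists_isSequenceCode_baireJump (hX : IsTopologicalBasis {D : Set X | IsClopen D}) :
    ∀ m, ∃ b a, IsSequenceCode (SigmaLevel X (2 * m)) (baireJump m) b a
  | 0 => ⟨_, _, ((isTwoPointCode_isClopen.relPow infClosed_isClopen).mono fun _ =>
      mem_countableUnionCompl_isClopen_of_isOpen hX).map (r := id) continuous_id
      fun _ _ => funext_iff⟩
  | m + 1 => by
    obtain ⟨b, a, hba⟩ := exists_isSequenceCode_baireJump hX m
    have hE := equivalence_baireJump m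
    exact ⟨_, _, ((hba.fsJump hE).relPow (infClosed_sigmaLevel (2 * m + 1))).map
      (FSJump.continuous_merge (isTagging_otimes m).continuous)
      (isTagging_otimes m).fsJump_merge_iff⟩

theorem exists_continuous_baireJump_iff (hX : IsTopologicalBasis {D : Set X | IsClopen D}) (m : ℕ)
    {D : ℕ → Set X} (hD : ∀ k, D k ∈ SigmaLevel X (2 * m + 1)) :
    ∃ Γ : X → Tower (m + 1), Continuous Γ ∧
      ∀ x y, baireJump (m + 1) (Γ x) (Γ y) ↔ ∀ k, (x ∈ D k ↔ y ∈ D k) := by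
  obtain ⟨b, a, hba⟩ := exists_isSequenceCode_baireJump hX m
  have hE := equivalence_baireJump m
  exact (hba.fsJump hE).exists_continuous_fsJump_iff hE (isTagging_otimes m) hD

end BaireJump

section VaughtTransform

variable {G X : Type*} [TopologicalSpace G]

theorem exists_isMeagre_diff_of_not_isMeagre_inter [SecondCountableTopology G] {U s : Set G}
    (hU : IsOpen U) (hs : BaireMeasurableSet s) (hUs : ¬ IsMeagre (U ∩ s)) :
    ∃ V ∈ countableBasis G, V ⊆ U ∧ IsMeagre (V \ s) := by
  obtain ⟨O, hO, hsO⟩ := hs.residualEq_isOpen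
  have hUO : (U ∩ O).Nonempty := by
    by_contra! hempty
    refine hUs ?_
    change (U ∩ s)ᶜ ∈ residual G
    filter_upwards [hsO.mem_iff] with g hg hgUs
    exact hempty.le ⟨hgUs.1, hg.1 hgUs.2⟩
  obtain ⟨V, hV, -, hVUO⟩ :=
    (isBasis_countableBasis G).exists_subset_of_mem_open hUO.some_mem (hU.inter hO)
  refine ⟨V, hV, hVUO.trans inter_subset_left, ?_⟩
  change (V \ s)ᶜ ∈ residual G
  filter_upwards [hsO.mem_iff] with g hg hgVs
  exact hgVs.2 (hg.2 (hVUO hgVs.1).2)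

section SMul

variable [SMul G X] {U : Set G}

/-- The Vaught transform `C^{ΔU}`: the set of `x` such that `g • x ∈ C` for nonmeagerly many
`g ∈ U`. -/
def vaughtTransform (C : Set X) (U : Set G) : Set X :=
  {x | ¬ IsMeagre (U ∩ {g | g • x ∈ C})}

theorem isOpen_vaughtTransform [BaireSpace G] [TopologicalSpace X] [ContinuousSMul G X]
    {C : Set X} (hC : IsOpen C) (hU : IsOpen U) :
    IsOpen (vaughtTransform C U) := by
  have : vaughtTransform C U = ⋃ g ∈ U, (g • ·) ⁻¹' C := by
    ext x
    have hopen : IsOpen (U ∩ {g | g • x ∈ C}) :=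
      hU.inter (hC.preimage (continuous_id.smul continuous_const))
    simp only [mem_iUnion, exists_prop, mem_preimage]
    exact ⟨nonempty_of_not_isMeagre, not_isMeagre_of_isOpen hopen⟩
  rw [this]
  exact isOpen_biUnion fun g _ => hC.preimage (continuous_const_smul g)

variable [BaireSpace G] [SecondCountableTopology G]

theorem vaughtTransform_iUnion_compl {κ : Type*} [Countable κ] {B : κ → Set X}
    (hB : ∀ i x, BaireMeasurableSet {g : G | g • x ∈ B i}) (hU : IsOpen U) :
    vaughtTransform (⋃ i, (B i)ᶜ) U =
      ⋃ k : κ × {V : countableBasis G // V.1 ⊆ U}, (vaughtTransform (B k.1) k.2.1.1)ᶜ := by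
  ext x
  simp only [mem_iUnion, Prod.exists, vaughtTransform, mem_compl_iff, mem_ofPred_eq, not_not]
  constructor
  · intro hx
    obtain ⟨i, hi⟩ : ∃ i, ¬ IsMeagre (U ∩ {g : G | g • x ∈ B i}ᶜ) := by
      by_contra! hmeagre
      refine hx ((isMeagre_iUnion hmeagre).mono ?_)
      rintro g ⟨hgU, i, hgi⟩
      exact mem_iUnion.2 ⟨i, hgU, hgi⟩
    obtain ⟨V, hV, hVU, hVi⟩ :=
      exists_isMeagre_diff_of_not_isMeagre_inter hU (hB i x).compl hi
    rw [sdiff_compl] at hVi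
    exact ⟨i, ⟨⟨V, hV⟩, hVU⟩, hVi⟩
  · rintro ⟨i, ⟨⟨V, hV⟩, hVU⟩, hVi⟩ hx
    refine not_isMeagre_of_isOpen (isOpen_of_mem_countableBasis hV)
      (nonempty_of_mem_countableBasis hV) ((hVi.union hx).mono fun g hgV => ?_)
    by_cases hgi : g • x ∈ B i
    · exact .inl ⟨hgV, hgi⟩
    · exact .inr ⟨hVU hgV, i, hgi⟩

theorem vaughtTransform_mem_sigmaLevel [TopologicalSpace X] [ContinuousSMul G X] :
    ∀ {n : ℕ} {C : Set X}, C ∈ SigmaLevel X n →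
      ∀ {U : Set G}, IsOpen U → vaughtTransform C U ∈ SigmaLevel X n
  | 0, _, hC, _, hU => isOpen_vaughtTransform hC hU
  | _ + 1, _, ⟨_, hB, hC⟩, _, hU => by
    rw [hC, vaughtTransform_iUnion_compl (fun i x => baireMeasurableSet_of_mem_sigmaLevel
      (preimage_mem_sigmaLevel (continuous_id.smul continuous_const) (hB i))) hU]
    exact iUnion_compl_mem_sigmaLevel fun k =>
      vaughtTransform_mem_sigmaLevel (hB k.1) (isOpen_of_mem_countableBasis k.2.1.2)

end SMul

variable [Group G] [MulAction G X] {C : Set X} {x : X}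

theorem smul_mem_vaughtTransform_univ_iff [SeparatelyContinuousMul G] (h : G) :
    h • x ∈ vaughtTransform C (univ : Set G) ↔ x ∈ vaughtTransform C (univ : Set G) := by
  have mem_of_smul_mem {y : X} (h : G) (hy : h • y ∈ vaughtTransform C (univ : Set G)) :
      y ∈ vaughtTransform C (univ : Set G) := by
    refine fun hmeagre => hy ((hmeagre.preimage_of_isOpenMap (Homeomorph.mulRight h).continuous
      (Homeomorph.mulRight h).isOpenMap).mono ?_)
    simp [mul_smul]
  exact ⟨mem_of_smul_mem h, fun hx => mem_of_smul_mem h⁻¹ (by rwa [inv_smul_smul])⟩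

theorem mem_vaughtTransform_univ_of_forall_smul_mem [BaireSpace G] (hx : ∀ g : G, g • x ∈ C) :
    x ∈ vaughtTransform C (univ : Set G) := by
  simpa [vaughtTransform, hx] using not_isMeagre_of_isOpen isOpen_univ (univ_nonempty (α := G))

theorem notMem_vaughtTransform_univ_of_forall_smul_notMem (hx : ∀ g : G, g • x ∉ C) :
    x ∉ vaughtTransform C (univ : Set G) := by
  simp [vaughtTransform, hx, IsMeagre.empty]

end VaughtTransform

section PermutationGroup

variable {α : Type*} [TopologicalSpace α]

theorem continuous_apply_of_discreteTopology [DiscreteTopology α] {Y β : Type*} [TopologicalSpace Y]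
    [TopologicalSpace β] {f : Y → α → β} {e : Y → α} (hf : Continuous f) (he : Continuous e) :
    Continuous fun y => f y (e y) :=
  (continuous_prod_of_discrete_left (f := fun p : α × (α → β) => p.2 p.1)).2 continuous_apply
    |>.comp (he.prodMk hf)

/-- The topology of pointwise convergence of a permutation together with its inverse; it makes
`Equiv.Perm ℕ` the Polish group `S_∞`. -/
instance : TopologicalSpace (Equiv.Perm α) :=
  .induced (fun σ => ((σ : α → α), (σ.symm : α → α))) inferInstance

theorem isInducing_perm :
    IsInducing fun σ : Equiv.Perm α => ((σ : α → α), (σ.symm : α → α)) :=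
  ⟨rfl⟩

theorem continuous_perm_coe : Continuous fun σ : Equiv.Perm α => (σ : α → α) :=
  continuous_fst.comp isInducing_perm.continuous

theorem continuous_perm_symm : Continuous fun σ : Equiv.Perm α => (σ.symm : α → α) :=
  continuous_snd.comp isInducing_perm.continuous

variable [DiscreteTopology α]

theorem isClosedEmbedding_perm :
    IsClosedEmbedding fun σ : Equiv.Perm α => ((σ : α → α), (σ.symm : α → α)) where
  toIsInducing := isInducing_perm
  injective _ _ h := DFunLike.coe_injective (congrArg Prod.fst h)
  isClosed_range := by
    have hrange : range (fun σ : Equiv.Perm α => ((σ : α → α), (σ.symm : α → α))) =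
        {p | (∀ k, p.2 (p.1 k) = k) ∧ ∀ k, p.1 (p.2 k) = k} := by
      ext p
      exact ⟨by rintro ⟨σ, rfl⟩; simp, fun hp => ⟨⟨p.1, p.2, hp.1, hp.2⟩, rfl⟩⟩
    simp only [hrange, ofPred_and, ofPred_forall]
    refine (isClosed_iInter fun k => isClosed_eq ?_ continuous_const).inter
      (isClosed_iInter fun k => isClosed_eq ?_ continuous_const)
    · exact continuous_apply_of_discreteTopology continuous_snd
        ((continuous_apply k).comp continuous_fst)
    · exact continuous_apply_of_discreteTopology continuous_fst
        ((continuous_apply k).comp continuous_snd)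

instance [Countable α] : PolishSpace (Equiv.Perm α) :=
  have : PolishSpace ((α → α) × (α → α)) := {}
  isClosedEmbedding_perm.polishSpace

instance : ContinuousMul (Equiv.Perm α) where
  continuous_mul := by
    refine isInducing_perm.continuous_iff.2 (.prodMk (continuous_pi fun k => ?_)
      (continuous_pi fun k => ?_))
    · exact continuous_apply_of_discreteTopology (e := fun p : Equiv.Perm α × Equiv.Perm α => p.2 k)
        (continuous_perm_coe.comp continuous_fst)
        ((continuous_apply k).comp (continuous_perm_coe.comp continuous_snd))
    · exact continuous_apply_of_discreteTopology
        (e := fun p : Equiv.Perm α × Equiv.Perm α => p.1.symm k)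
        (continuous_perm_symm.comp continuous_snd)
        ((continuous_apply k).comp (continuous_perm_symm.comp continuous_fst))

end PermutationGroup

section LogicAction

variable {ι : Type} {ar : ι → ℕ} {S T : Md ι ar}

/-- The logic action, which transports a structure along a permutation of its domain. -/
instance : MulAction (Equiv.Perm ℕ) (Md ι ar) where
  smul σ S := fun i v => S i (⇑σ.symm ∘ v)
  one_smul _ := rfl
  mul_smul _ _ _ := rfl

instance : ContinuousSMul (Equiv.Perm ℕ) (Md ι ar) where
  continuous_smul := by
    refine continuous_pi fun i => continuous_pi fun v => ?_
    refine continuous_apply_of_discreteTopology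
      (f := fun p : Equiv.Perm ℕ × Md ι ar => p.2 i) (e := fun p => ⇑p.1.symm ∘ v) ?_ ?_
    · exact (continuous_apply (A := fun i => (Fin (ar i) → ℕ) → Bool) i).comp continuous_snd
    · exact continuous_pi fun k => (continuous_apply (v k)).comp
        (continuous_perm_symm.comp continuous_fst)

theorem iso_iff_mem_orbit : Iso S T ↔ S ∈ MulAction.orbit (Equiv.Perm ℕ) T := by
  constructor
  · rintro ⟨σ, hσ, hST⟩
    exact ⟨(Equiv.ofBijective σ hσ).symm, (funext₂ hST).symm⟩
  · rintro ⟨σ, rfl⟩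
    exact ⟨σ.symm, σ.symm.bijective, fun _ _ => rfl⟩

theorem equivalence_iso : Equivalence (Iso : Md ι ar → Md ι ar → Prop) := by
  convert (MulAction.orbitRel (Equiv.Perm ℕ) (Md ι ar)).iseqv
  ext
  exact iso_iff_mem_orbit

end LogicAction

section Learning

theorem isHereditarilyLindelof_biUnion_range {X Y κ : Type*} [TopologicalSpace X]
    [TopologicalSpace Y] [HereditarilyLindelofSpace Y] {s : Set κ} (hs : s.Countable)
    {f : κ → Y → X} (hf : ∀ k ∈ s, Continuous (f k)) :
    IsHereditarilyLindelof (⋃ k ∈ s, range (f k)) := by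
  intro t ht
  have htf : t = ⋃ k ∈ s, f k '' (f k ⁻¹' t) := by
    simp only [image_preimage_eq_inter_range, ← inter_iUnion₂, inter_eq_self_of_subset_left ht]
  rw [htf]
  exact hs.isLindelof_biUnion fun k hk => (HereditarilyLindelofSpace.isLindelof _).image (hf k hk)

theorem isTopologicalBasis_isClopen_of_isInducing {X Y : Type*} [TopologicalSpace X]
    [TopologicalSpace Y] {f : X → Y} (hf : IsInducing f)
    (hY : IsTopologicalBasis {D : Set Y | IsClopen D}) :
    IsTopologicalBasis {D : Set X | IsClopen D} :=
  (hY.isInducing hf).of_isOpen_of_subset (fun _ hD => hD.isOpen) <|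
    image_subset_iff.2 fun _ hD => hD.preimage hf.continuous

variable {ι : Type} {ar : ι → ℕ} {K : Set (Md ι ar)} {A B : Md ι ar} {n : ℕ}

theorem isTopologicalBasis_isClopen_md : IsTopologicalBasis {D : Set (Md ι ar) | IsClopen D} :=
  isTopologicalBasis_isClopen (X := ∀ i, (Fin (ar i) → ℕ) → Bool)

theorem hereditarilyLindelofSpace_learnDom (hK : K.Countable) :
    HereditarilyLindelofSpace (LearnDom K) := by
  have horbits : LearnDom K = ⋃ A ∈ K, range fun σ : Equiv.Perm ℕ => σ • A := by
    ext S
    simp only [LearnDom, iso_iff_mem_orbit, mem_iUnion, exists_prop]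
    rfl
  have hlindelof : IsHereditarilyLindelof (LearnDom K) := horbits ▸
    isHereditarilyLindelof_biUnion_range hK fun A _ => continuous_id.smul continuous_const
  exact .of_forall_isOpen fun s _ =>
    Subtype.isLindelof_iff.2 (hlindelof _ (Subtype.coe_image_subset _ s))

/-- `C` separates the isomorphism class of `A` from that of `B`: it contains the former and is
disjoint from the latter. -/
def SeparatesIso (C : Set (Md ι ar)) (A B : Md ι ar) : Prop :=
  (∀ S, Iso S A → S ∈ C) ∧ ∀ S, Iso S B → S ∉ C

theorem exists_separatesIso_of_learnable {Z : Type*} [TopologicalSpace Z] {E : Z → Z → Prop}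
    (hE : Equivalence E) (hclass : ∀ z, {w | ¬ E w z} ∈ SigmaLevel Z n)
    (hK : Learnable (FSJump E) K) (hA : A ∈ K) (hB : B ∈ K) (hAB : ¬ Iso A B) :
    ∃ C ∈ SigmaLevel (Md ι ar) (n + 1), SeparatesIso C A B ∨ SeparatesIso C B A := by
  obtain ⟨Γ, hΓ, hiso⟩ := hK
  let dom {T : Md ι ar} (hT : T ∈ K) : LearnDom K := ⟨T, T, hT, equivalence_iso.refl T⟩
  obtain ⟨D, hD, hinv, hsep⟩ := exists_fsJump_invariant_mem_sigmaLevel hE hclass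
    (mt (hiso (dom hA) (dom hB)).2 hAB)
  obtain ⟨C, hC, hCD⟩ :=
    exists_sigmaLevel_preimage_eq_of_isInducing .subtypeVal (preimage_mem_sigmaLevel hΓ hD)
  have mem_iff {S T : Md ι ar} (hT : T ∈ K) (hST : Iso S T) : S ∈ C ↔ Γ (dom hT) ∈ D := by
    let S' : LearnDom K := ⟨S, T, hT, hST⟩
    have hS : S ∈ C ↔ Γ S' ∈ D := Set.ext_iff.1 hCD S'
    rw [hS, hinv _ _ ((hiso S' (dom hT)).1 hST)]
  refine ⟨C, hC, ?_⟩
  by_cases hAD : Γ (dom hA) ∈ D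
  · have hBD : Γ (dom hB) ∉ D := fun hBD => hsep (iff_of_true hAD hBD)
    exact .inl ⟨fun _ hS => (mem_iff hA hS).2 hAD, fun _ hS => mt (mem_iff hB hS).1 hBD⟩
  · have hBD : Γ (dom hB) ∈ D := by_contra fun hBD => hsep (iff_of_false hAD hBD)
    exact .inr ⟨fun _ hS => (mem_iff hB hS).2 hBD, fun _ hS => mt (mem_iff hA hS).1 hAD⟩

theorem SeparatesIso.exists_invariant_mem_sigmaLevel {C : Set (Md ι ar)} (hC : SeparatesIso C A B)
    (hCn : C ∈ SigmaLevel (Md ι ar) n) :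
    ∃ D ∈ SigmaLevel (Md ι ar) n, (∀ S T, Iso S T → (S ∈ D ↔ T ∈ D)) ∧ A ∈ D ∧ B ∉ D := by
  refine ⟨vaughtTransform C (univ : Set (Equiv.Perm ℕ)),
    vaughtTransform_mem_sigmaLevel hCn isOpen_univ, fun S T hST => ?_,
    mem_vaughtTransform_univ_of_forall_smul_mem fun σ =>
      hC.1 _ (iso_iff_mem_orbit.2 (MulAction.mem_orbit A σ)),
    notMem_vaughtTransform_univ_of_forall_smul_notMem fun σ =>
      hC.2 _ (iso_iff_mem_orbit.2 (MulAction.mem_orbit B σ))⟩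
  obtain ⟨σ, rfl⟩ := iso_iff_mem_orbit.1 hST
  exact smul_mem_vaughtTransform_univ_iff σ

theorem exists_seq_sigmaLevel_iso_iff (hK : K.Countable)
    (hsep : ∀ A ∈ K, ∀ B ∈ K, ¬ Iso A B →
      ∃ C ∈ SigmaLevel (Md ι ar) n, SeparatesIso C A B ∨ SeparatesIso C B A) :
    ∃ D : ℕ → Set (Md ι ar), (∀ k, D k ∈ SigmaLevel (Md ι ar) n) ∧
      ∀ S ∈ LearnDom K, ∀ T ∈ LearnDom K, Iso S T ↔ ∀ k, (S ∈ D k ↔ T ∈ D k) := by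
  rcases K.eq_empty_or_nonempty with rfl | hne
  · exact ⟨fun _ => univ, fun _ => (empty_and_univ_mem_sigmaLevel n).2, by simp [LearnDom]⟩
  obtain ⟨A, rfl⟩ := hK.exists_eq_range hne
  have hD (i j : ℕ) : ∃ D ∈ SigmaLevel (Md ι ar) n,
      (∀ S T, Iso S T → (S ∈ D ↔ T ∈ D)) ∧ ((A i ∈ D ↔ A j ∈ D) → Iso (A i) (A j)) := by
    by_cases hij : Iso (A i) (A j)
    · exact ⟨univ, (empty_and_univ_mem_sigmaLevel n).2, by simp, fun _ => hij⟩
    obtain ⟨C, hCn, hC | hC⟩ := hsep _ ⟨i, rfl⟩ _ ⟨j, rfl⟩ hij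
    all_goals
      obtain ⟨D, hD, hinv, hmem, hnotMem⟩ := hC.exists_invariant_mem_sigmaLevel hCn
      exact ⟨D, hD, hinv, by simp [hmem, hnotMem]⟩
  choose D hD hinv hiso using hD
  refine ⟨fun k => D k.unpair.1 k.unpair.2, fun k => hD _ _, ?_⟩
  rintro S ⟨_, ⟨i, rfl⟩, hS⟩ T ⟨_, ⟨j, rfl⟩, hT⟩
  refine ⟨fun hST k => hinv _ _ _ _ hST, fun hST => ?_⟩
  have hij := hST (Nat.pair i j)
  simp only [Nat.unpair_pair] at hij
  rw [hinv i j _ _ hS, hinv i j _ _ hT] at hij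
  exact equivalence_iso.trans hS (equivalence_iso.trans (hiso i j hij) (equivalence_iso.symm hT))

theorem stmt_13_general (n : ℕ) (hK : K.Countable) :
    Learnable (eqBairePlus n) K ↔
      ∀ A ∈ K, ∀ B ∈ K, ¬ Iso A B →
        ∃ C ∈ SigmaLevel (Md ι ar) (2 * n + 1), SeparatesIso C A B ∨ SeparatesIso C B A := by
  rw [eqBairePlus_eq_baireJump]
  constructor
  · exact fun hlearn A hA B hB => exists_separatesIso_of_learnable (equivalence_baireJump n)
      (not_baireJump_mem_sigmaLevel n) hlearn hA hB
  · intro hsep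
    obtain ⟨D, hD, hiso⟩ := exists_seq_sigmaLevel_iso_iff hK hsep
    have := hereditarilyLindelofSpace_learnDom hK
    obtain ⟨Γ, hΓ, hΓD⟩ := exists_continuous_baireJump_iff
      (isTopologicalBasis_isClopen_of_isInducing .subtypeVal isTopologicalBasis_isClopen_md) n
      fun k => preimage_mem_sigmaLevel (continuous_subtype_val (p := (· ∈ LearnDom K))) (hD k)
    exact ⟨Γ, hΓ, fun S T => (hiso S S.2 T T.2).trans (hΓD S T).symm⟩

end Learning

/-- for `n ≥ 1` (via the shift: `eqBairePlus n = =_{ℕ^ℕ}^{(n+1)+}`,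
`SigmaLevel (Md ι ar) (2*n+1) = Σ⁰_{2(n+1)}`), a countable family `{A i : i ∈ ℕ}` of
pairwise nonisomorphic structures is `=_{ℕ^ℕ}^{(n+1)+}`-learnable iff any two of its
members are separated (up to isomorphism) by a `Σ⁰_{2(n+1)}` set. -/
theorem stmt_13 {ι : Type} [Countable ι] (ar : ι → ℕ) (har : ∃ i, 2 ≤ ar i) (n : ℕ)
    (A : ℕ → Md ι ar) (hA : ∀ i j, i ≠ j → ¬ Iso (A i) (A j)) :
    Learnable (eqBairePlus n) (Set.range A) ↔
      ∀ i j, i ≠ j → ∃ C ∈ SigmaLevel (Md ι ar) (2 * n + 1),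
        ((∀ S, Iso S (A i) → S ∈ C) ∧ (∀ S, Iso S (A j) → S ∉ C)) ∨
        ((∀ S, Iso S (A j) → S ∈ C) ∧ (∀ S, Iso S (A i) → S ∉ C)) := by
  simp only [stmt_13_general n (countable_range A), forall_mem_range]
  exact forall₂_congr fun i j =>
    imp_congr_left ⟨fun hij h => hij (h ▸ equivalence_iso.refl _), hA i j⟩
end

section
/- Let E be an equivalence relation on a topological space X and F an equivalence relation on a topological space Y. If E is compact for learning and F is not learn-reducible to E, then there exist nonisomorphic structures A, B ∈ Mod such that the pair {A, B} is F-learnable and not E-learnable. -/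
section

variable {ι : Type} {ar : ι → ℕ} {X Y : Type*} [TopologicalSpace X] [TopologicalSpace Y]

theorem LearnDom.mono {K L : Set (Md ι ar)} (hKL : K ⊆ L) : LearnDom K ⊆ LearnDom L :=
  fun _ ⟨A, hA, hiso⟩ ↦ ⟨A, hKL hA, hiso⟩

theorem Learnable.mono {E : X → X → Prop} {K L : Set (Md ι ar)} (hKL : K ⊆ L)
    (hL : Learnable E L) : Learnable E K := by
  obtain ⟨Γ, hΓ_cont, hΓ⟩ := hL
  have hdom : LearnDom K ⊆ LearnDom L := LearnDom.mono hKL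
  exact ⟨Γ ∘ Set.inclusion hdom, hΓ_cont.comp (continuous_inclusion hdom),
    fun S S' ↦ hΓ (Set.inclusion hdom S) (Set.inclusion hdom S')⟩

theorem CompactForLearning.exists_pair_not_learnable {E : X → X → Prop}
    (hE : CompactForLearning ι ar E) {K : Set (Md ι ar)} (hK : GoodFamily K)
    (hEK : ¬ Learnable E K) :
    ∃ A ∈ K, ∃ B ∈ K, A ≠ B ∧ ¬ Learnable E ({A, B} : Set (Md ι ar)) := by
  by_contra! hpairs
  exact hEK ((hE K hK).2 hpairs)

theorem stmt_16_general {E : X → X → Prop} {F : Y → Y → Prop}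
    (hE : CompactForLearning ι ar E) (hFE : ¬ LearnRed ι ar F E) :
    ∃ A B : Md ι ar, ¬ Iso A B ∧
      Learnable F ({A, B} : Set (Md ι ar)) ∧
      ¬ Learnable E ({A, B} : Set (Md ι ar)) := by
  obtain ⟨K, hK, hFK, hEK⟩ : ∃ K : Set (Md ι ar),
      GoodFamily K ∧ Learnable F K ∧ ¬ Learnable E K := by
    simpa only [LearnRed, not_forall, exists_prop] using hFE
  obtain ⟨A, hA, B, hB, hne, hEAB⟩ := hE.exists_pair_not_learnable hK hEK
  exact ⟨A, B, hK.2 A hA B hB hne, hFK.mono (Set.pair_subset hA hB), hEAB⟩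

end

/-- if `E` is compact for learning and `F` is not learn-reducible to `E`,
then some pair of nonisomorphic structures is `F`-learnable but not `E`-learnable. -/
theorem stmt_16 {ι : Type} [Countable ι] (ar : ι → ℕ)
    {X Y : Type*} [TopologicalSpace X] [TopologicalSpace Y]
    (E : X → X → Prop) (F : Y → Y → Prop) (hE : Equivalence E) (hF : Equivalence F)
    (hcomp : CompactForLearning ι ar E) (hred : ¬ LearnRed ι ar F E) :
    ∃ A B : Md ι ar, ¬ Iso A B ∧
      Learnable F ({A, B} : Set (Md ι ar)) ∧
      ¬ Learnable E ({A, B} : Set (Md ι ar)) :=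
  stmt_16_general hcomp hred
end
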